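/- Let F be a nonabelian free group of rank 2 and let K be a normal subgroup of F that satisfies a group law. Then K is trivial. -/

import Mathlib

/-!
If `a` and `b` belong to a free basis, the conjugates `bⁿ a b⁻ⁿ` freely generate a free group of
infinite rank, in which every nontrivial word takes a nontrivial value. By Nielsen–Schreier, a
subgroup `K` of a free group that satisfies a nontrivial law is therefore free of rank at most one,
hence cyclic. If `K = ⟨g⟩` is moreover normal, conjugation by any `x` sends `g` to `g` or `g⁻¹`, so
`x²` commutes with `g`; uniqueness of roots in free groups then makes `x` commute with `g`. Thus `K`
is central, and the centre of a noncyclic free group is trivial because a central element would be a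
power of each of two distinct basis elements.
-/

/-- The word `w` is a law of the group `G`: substituting any elements of `G` for the letters of `w`
yields `1`. The empty word `w = 1` is not excluded, so that the notion constrains `G` only when
`w ≠ 1`. -/
def IsGroupLaw {α : Type*} (w : FreeGroup α) (G : Type*) [Group G] : Prop :=
  ∀ f : α → G, FreeGroup.lift f w = 1

section Laws

variable {α : Type*} {w : FreeGroup α} {G H : Type*} [Group G] [Group H]

theorem map_freeGroup_lift (φ : G →* H) (f : α → G) (w : FreeGroup α) :
    φ (FreeGroup.lift f w) = FreeGroup.lift (φ ∘ f) w :=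
  FreeGroup.lift_unique (φ.comp (FreeGroup.lift f)) fun _ => by simp

theorem IsGroupLaw.of_injective (h : IsGroupLaw w H) {φ : G →* H} (hφ : Function.Injective φ) :
    IsGroupLaw w G := fun f =>
  (map_eq_one_iff φ hφ).1 (by rw [map_freeGroup_lift, h])

theorem isGroupLaw_subgroup_of_forall_mem {K : Subgroup G}
    (h : ∀ f : α → G, (∀ i, f i ∈ K) → FreeGroup.lift f w = 1) : IsGroupLaw w K := fun f =>
  Subtype.val_injective ((map_freeGroup_lift K.subtype f w).trans (h _ fun i => (f i).2))

theorem exists_freeGroup_map_ne_one (β : Type*) [Infinite β] (hw : w ≠ 1) :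
    ∃ f : α → β, FreeGroup.map f w ≠ 1 := by
  obtain ⟨L, rfl⟩ : ∃ L, FreeGroup.mk L = w := Quot.exists_rep w
  have : Nonempty α := not_isEmpty_iff.1 fun _ => hw (Subsingleton.elim _ _)
  let letters : Set α := {a | a ∈ L.map Prod.fst}
  obtain ⟨f, -, f_injOn⟩ : ∃ f : α → β, letters ⊆ f ⁻¹' Set.univ ∧ Set.InjOn f letters :=
    (List.finite_toSet _).exists_injOn_of_encard_le (by simp)
  have map_invFunOn : FreeGroup.map (Function.invFunOn f letters) (FreeGroup.map f (.mk L)) =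
      FreeGroup.mk L := by
    rw [FreeGroup.map.mk, FreeGroup.map.mk, List.map_map]
    refine congrArg FreeGroup.mk ((List.map_congr_left fun x hx => ?_).trans (List.map_id L))
    exact Prod.ext (f_injOn.leftInvOn_invFunOn (List.mem_map_of_mem hx)) rfl
  exact ⟨f, fun h => hw (by rw [← map_invFunOn, h, map_one])⟩

theorem not_isGroupLaw_freeGroup_of_infinite (β : Type*) [Infinite β] (hw : w ≠ 1) :
    ¬ IsGroupLaw w (FreeGroup β) := fun h => by
  obtain ⟨f, hf⟩ := exists_freeGroup_map_ne_one β hw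
  exact hf (by rw [FreeGroup.map_eq_lift, h])

end Laws

/-- The action of the infinite cyclic group on `FreeGroup ℤ` by translation of the free
generators. -/
def translationAut : Multiplicative ℤ →* MulAut (FreeGroup ℤ) where
  toFun n := FreeGroup.freeGroupCongr (Equiv.addLeft n.toAdd)
  map_one' := by
    ext x
    simp
  map_mul' m n := by
    ext x
    simp [FreeGroup.map.comp, Function.comp_def]

theorem inr_conj_inl_of_zero (n : ℤ) :
    (SemidirectProduct.inr (.ofAdd 1) ^ n * SemidirectProduct.inl (.of 0) *
      (SemidirectProduct.inr (.ofAdd 1) ^ n)⁻¹ : FreeGroup ℤ ⋊[translationAut] Multiplicative ℤ) =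
      SemidirectProduct.inl (.of n) := by
  rw [← map_zpow, ← map_inv, ← SemidirectProduct.inl_aut, ← ofAdd_zsmul]
  simp [translationAut]

section Basis

variable {ι G : Type*} [Group G]

theorem freeGroupBasis_lift_apply {H : Type*} [Group H] (b : FreeGroupBasis ι G) (f : ι → H)
    (i : ι) : b.lift f (b i) = f i :=
  congrFun (b.lift.symm_apply_apply f) i

theorem injective_lift_zpow_conj (b : FreeGroupBasis ι G) {i j : ι} (hij : i ≠ j) :
    Function.Injective (FreeGroup.lift fun n : ℤ => b j ^ n * b i * (b j ^ n)⁻¹) := by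
  classical
  -- `p` sends the conjugates of `b i` to the free generators of the normal factor.
  let p : G →* FreeGroup ℤ ⋊[translationAut] Multiplicative ℤ := b.lift fun k =>
    if k = i then SemidirectProduct.inl (.of 0) else SemidirectProduct.inr (.ofAdd 1)
  have p_i : p (b i) = SemidirectProduct.inl (.of 0) := by
    simp only [p, freeGroupBasis_lift_apply, if_true]
  have p_j : p (b j) = SemidirectProduct.inr (.ofAdd 1) := by
    simp only [p, freeGroupBasis_lift_apply, if_neg hij.symm]
  have p_comp_lift : p.comp (FreeGroup.lift fun n : ℤ => b j ^ n * b i * (b j ^ n)⁻¹) =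
      SemidirectProduct.inl := by
    ext1 n
    simp only [MonoidHom.comp_apply, FreeGroup.lift_apply_of, map_mul, map_inv, map_zpow, p_i, p_j,
      inr_conj_inl_of_zero]
  refine Function.Injective.of_comp (f := p) ?_
  rw [← MonoidHom.coe_comp, p_comp_lift]
  exact SemidirectProduct.inl_injective

theorem isCyclic_of_subsingleton_basis [Subsingleton ι] (b : FreeGroupBasis ι G) : IsCyclic G := by
  have : IsCyclic (FreeGroup ι) := by
    cases isEmpty_or_nonempty ι
    · infer_instance
    · have := Nonempty.some (nonempty_unique ι)
      infer_instance
  exact isCyclic_of_surjective b.repr.symm b.repr.symm.surjective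

theorem disjoint_zpowers_basis (b : FreeGroupBasis ι G) {i j : ι} (hij : i ≠ j) :
    Disjoint (Subgroup.zpowers (b i)) (Subgroup.zpowers (b j)) := by
  classical
  rw [Subgroup.disjoint_def]
  rintro _ ⟨m, rfl⟩ ⟨n, hn : b j ^ n = b i ^ m⟩
  have images_eq := congrArg (b.lift (Pi.mulSingle i (Multiplicative.ofAdd (1 : ℤ)))) hn
  have m_eq_zero : m = 0 := by
    rwa [map_zpow, map_zpow, freeGroupBasis_lift_apply, freeGroupBasis_lift_apply,
      Pi.mulSingle_eq_same, Pi.mulSingle_eq_of_ne hij.symm, one_zpow, ← ofAdd_zsmul, eq_comm,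
      ofAdd_eq_one, smul_eq_mul, mul_one] at images_eq
  simp only [m_eq_zero, zpow_zero]

end Basis

section IsFreeGroup

variable {G : Type*} [Group G] [IsFreeGroup G]

theorem isCyclic_of_isGroupLaw {α : Type*} {w : FreeGroup α} (hw : w ≠ 1) (h : IsGroupLaw w G) :
    IsCyclic G := by
  have : Subsingleton (IsFreeGroup.Generators G) := ⟨fun i j => by_contra fun hij =>
    not_isGroupLaw_freeGroup_of_infinite ℤ hw
      (h.of_injective (injective_lift_zpow_conj (IsFreeGroup.basis G) hij))⟩
  exact isCyclic_of_subsingleton_basis (IsFreeGroup.basis G)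

open scoped commutatorElement in
theorem isCyclic_of_isMulCommutative [IsMulCommutative G] : IsCyclic G := by
  have commutator_ne_one : ⁅FreeGroup.of (0 : Fin 2), FreeGroup.of (1 : Fin 2)⁆ ≠ 1 := by decide
  refine isCyclic_of_isGroupLaw commutator_ne_one fun f => ?_
  rw [map_commutatorElement, commutatorElement_eq_one_iff_mul_comm, mul_comm']

theorem isCyclic_closure_pair_of_commute {x y : G} (h : Commute x y) :
    IsCyclic (Subgroup.closure {x, y}) := by
  have : IsMulCommutative (Subgroup.closure {x, y}) := Subgroup.isMulCommutative_closure (by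
    rintro u (rfl | rfl) v (rfl | rfl)
    exacts [rfl, h.eq, h.eq.symm, rfl])
  exact isCyclic_of_isMulCommutative

end IsFreeGroup

section Basis

variable {ι G : Type*} [Group G]

theorem mem_zpowers_of_commute_basis (b : FreeGroupBasis ι G) {i : ι} {g : G}
    (h : Commute (b i) g) : g ∈ Subgroup.zpowers (b i) := by
  have := b.isFreeGroup
  obtain ⟨c, hc⟩ := (Subgroup.isCyclic_iff_exists_zpowers_eq_top _).1
    (isCyclic_closure_pair_of_commute h)
  obtain ⟨n, hn : c ^ n = b i⟩ : b i ∈ Subgroup.zpowers c :=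
    hc ▸ Subgroup.subset_closure (by simp)
  have g_mem : g ∈ Subgroup.zpowers c := hc ▸ Subgroup.subset_closure (by simp)
  let exponentSum : G →* Multiplicative ℤ := b.lift fun _ => .ofAdd 1
  have n_mul_exponentSum : n * (exponentSum c).toAdd = 1 := by
    rw [← smul_eq_mul, ← toAdd_zpow, ← map_zpow, hn, freeGroupBasis_lift_apply, toAdd_ofAdd]
  have zpowers_eq : Subgroup.zpowers c = Subgroup.zpowers (b i) := by
    rcases Int.eq_one_or_neg_one_of_mul_eq_one n_mul_exponentSum with rfl | rfl <;> simp [← hn]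
  exact zpowers_eq ▸ g_mem

theorem not_isCyclic_of_nontrivial_basis [Nontrivial ι] (b : FreeGroupBasis ι G) :
    ¬ IsCyclic G := fun _ => by
  obtain ⟨i, j, hij⟩ := exists_pair_ne ι
  have b_j_eq_one : b j = 1 := Subgroup.disjoint_def.1 (disjoint_zpowers_basis b hij)
    (mem_zpowers_of_commute_basis b (mul_comm' _ _)) (Subgroup.mem_zpowers _)
  exact FreeGroup.of_ne_one j (by rw [← b.repr_apply_coe, b_j_eq_one, map_one])

end Basis

theorem center_eq_bot_of_not_isCyclic {G : Type*} [Group G] [IsFreeGroup G] (hG : ¬ IsCyclic G) :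
    Subgroup.center G = ⊥ := by
  let b := IsFreeGroup.basis G
  have : Nontrivial (IsFreeGroup.Generators G) := not_subsingleton_iff_nontrivial.1 fun _ =>
    hG (isCyclic_of_subsingleton_basis b)
  obtain ⟨i, j, hij⟩ := exists_pair_ne (IsFreeGroup.Generators G)
  refine (Subgroup.eq_bot_iff_forall _).2 fun z hz => ?_
  have z_mem_zpowers k : z ∈ Subgroup.zpowers (b k) :=
    mem_zpowers_of_commute_basis b (Subgroup.mem_center_iff.1 hz (b k))
  exact Subgroup.disjoint_def.1 (disjoint_zpowers_basis b hij) (z_mem_zpowers i) (z_mem_zpowers j)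

section TorsionFree

variable {G : Type*} [Group G] [IsMulTorsionFree G]

theorem commute_of_commute_pow {x y : G} {n : ℕ} (hn : n ≠ 0) (h : Commute (x ^ n) y) :
    Commute x y := by
  have conj_pow_eq : (y * x * y⁻¹) ^ n = x ^ n := by rw [conj_pow, ← h.eq, mul_inv_cancel_right]
  exact (mul_inv_eq_iff_eq_mul.1 ((pow_left_inj hn).1 conj_pow_eq)).symm

theorem le_center_of_normal_of_isCyclic (K : Subgroup G) [K.Normal] [IsCyclic K] :
    K ≤ Subgroup.center G := by
  obtain ⟨g, rfl⟩ := K.isCyclic_iff_exists_zpowers_eq_top.1 ‹_›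
  rw [Subgroup.zpowers_le, Subgroup.mem_center_iff]
  intro x
  rcases eq_or_ne g 1 with rfl | hg
  · rw [mul_one, one_mul]
  have zpowers_conj : Subgroup.zpowers g = Subgroup.zpowers (x * g * x⁻¹) := by
    simpa using ((Subgroup.zpowers g).normal_iff_map_conj_eq.1 ‹_› x).symm
  have commute_sq : Commute (x ^ 2) g := by
    rcases (Subgroup.zpowers_eq_zpowers_iff (not_isOfFinOrder_of_isMulTorsionFree hg)).1
      zpowers_conj with conj_eq | conj_eq
    · have x_fixes : Commute x g := (eq_mul_inv_iff_mul_eq.1 conj_eq).symm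
      exact x_fixes.pow_left 2
    · have x_inverts : SemiconjBy x g g⁻¹ := (eq_mul_inv_iff_mul_eq.1 conj_eq).symm
      have x_inverts_inv : SemiconjBy x g⁻¹ g := by
        simpa only [inv_inv] using x_inverts.inv_right
      exact pow_two x ▸ x_inverts_inv.mul_left x_inverts
  exact commute_of_commute_pow two_ne_zero commute_sq

end TorsionFree

theorem isMulTorsionFree_of_isFreeGroup (G : Type*) [Group G] [IsFreeGroup G] :
    IsMulTorsionFree G :=
  (IsFreeGroup.toFreeGroup G).injective.isMulTorsionFree (IsFreeGroup.toFreeGroup G).toMonoidHom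

theorem normal_law_subgroup_free2_trivial_general {G : Type*} [Group G] [IsFreeGroup G]
    (hG : ¬ IsCyclic G) (K : Subgroup G) [K.Normal] {α : Type*} {w : FreeGroup α} (hw : w ≠ 1)
    (hK : IsGroupLaw w K) : K = ⊥ := by
  have := isMulTorsionFree_of_isFreeGroup G
  have : IsCyclic K := isCyclic_of_isGroupLaw hw hK
  rw [eq_bot_iff, ← center_eq_bot_of_not_isCyclic hG]
  exact le_center_of_normal_of_isCyclic K

/-- A normal subgroup of the free group of rank 2 that satisfies a
nontrivial group law is trivial. -/
theorem normal_law_subgroup_free2_trivial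
    (K : Subgroup (FreeGroup (Fin 2))) [K.Normal]
    {r : ℕ} (w : FreeGroup (Fin r)) (hw : w ≠ 1)
    (hK : ∀ f : Fin r → FreeGroup (Fin 2), (∀ i, f i ∈ K) →
      FreeGroup.lift f w = 1) :
    K = ⊥ :=
  normal_law_subgroup_free2_trivial_general
    (not_isCyclic_of_nontrivial_basis (.ofFreeGroup (Fin 2))) K hw
    (isGroupLaw_subgroup_of_forall_mem hK)
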